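/- arXiv:1701.06241 — 3 statements merged into one kernel-verified Lean document; each statement's English description precedes it below -/
import Mathlib

section
/- Let α, β : ℕ → ℝ be sequences such that α is strictly increasing (α(h) < α(h+1) for all h) and concave as a sequence (α(h+1) − α(h) ≤ α(h) − α(h−1) for all h ≥ 1), and β is affine with nonnegative slope (there exists d ≥ 0 with β(h+1) − β(h) = d for all h). Let r, c, W be real numbers with W + c > 0, and define φ(h) = (W + c)·(β(h) − β(h−1)) / (α(h) − α(h−1)) for h ≥ 1. If h₀ ≥ 1 satisfies φ(h₀) < r + c ≤ φ(h₀ + 1), then h₀ is a global maximizer of the objective f(h) = (r + c)·α(h) − (W + c)·β(h): for every h ∈ ℕ, f(h) ≤ f(h₀). -/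
/-- A sequence with antitone increments is maximal at an index where the increments change sign. -/
theorem le_of_antitone_sub_of_sign_change {f : ℕ → ℝ}
    (hf : Antitone fun n => f (n + 1) - f n) {k : ℕ}
    (hk : 0 ≤ f (k + 1) - f k) (hk' : f (k + 2) - f (k + 1) ≤ 0) (n : ℕ) :
    f n ≤ f (k + 1) := by
  rcases le_total n (k + 1) with hn | hn
  · induction hn using Nat.decreasingInduction with
    | self => exact le_rfl
    | of_succ m hm ih =>
      have h : f (k + 1) - f k ≤ f (m + 1) - f m := hf (Nat.lt_succ_iff.mp hm)
      linarith
  · induction n, hn using Nat.le_induction with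
    | base => exact le_rfl
    | succ m hm ih =>
      have h : f (m + 1) - f m ≤ f (k + 2) - f (k + 1) := hf hm
      linarith

/-- Theorem 2: with α increasing concave, β affine with nonnegative slope,
φ(h) = (W+c)(β(h)−β(h−1))/(α(h)−α(h−1)); if φ(h₀) < r + c ≤ φ(h₀+1)
then h₀ globally maximizes f(h) = (r+c)·α(h) − (W+c)·β(h). -/
theorem stmt1 (α β : ℕ → ℝ) (r c W : ℝ)
    (hinc : ∀ h : ℕ, α h < α (h + 1))
    (hconc : ∀ h : ℕ, 1 ≤ h → α (h + 1) - α h ≤ α h - α (h - 1))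
    (haff : ∃ d : ℝ, 0 ≤ d ∧ ∀ h : ℕ, β (h + 1) - β h = d)
    (hWc : 0 < W + c)
    (φ : ℕ → ℝ)
    (hφ : ∀ h : ℕ, 1 ≤ h → φ h = (W + c) * (β h - β (h - 1)) / (α h - α (h - 1)))
    (h₀ : ℕ) (hh₀ : 1 ≤ h₀)
    (hlt : φ h₀ < r + c) (hge : r + c ≤ φ (h₀ + 1)) :
    ∀ h : ℕ, (r + c) * α h - (W + c) * β h ≤ (r + c) * α h₀ - (W + c) * β h₀ := by
  obtain ⟨d, hd, hβ⟩ := haff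
  obtain ⟨k, rfl⟩ := Nat.exists_eq_add_of_le' hh₀
  have hpos : ∀ n, 0 < α (n + 1) - α n := fun n => sub_pos.mpr (hinc n)
  have hφ' : ∀ n, φ (n + 1) = (W + c) * d / (α (n + 1) - α n) := fun n => by
    rw [hφ (n + 1) n.succ_pos, Nat.add_sub_cancel, hβ]
  have hrc : 0 < r + c := by
    refine lt_of_le_of_lt ?_ hlt
    rw [hφ']
    exact div_nonneg (mul_nonneg hWc.le hd) (hpos k).le
  rw [hφ', div_lt_iff₀ (hpos k)] at hlt
  rw [hφ', le_div_iff₀ (hpos (k + 1))] at hge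
  have hstep : ∀ n, ((r + c) * α (n + 1) - (W + c) * β (n + 1)) - ((r + c) * α n - (W + c) * β n)
      = (r + c) * (α (n + 1) - α n) - (W + c) * d := fun n => by
    rw [← hβ n]
    ring
  refine le_of_antitone_sub_of_sign_change
    (f := fun n => (r + c) * α n - (W + c) * β n) (antitone_nat_of_succ_le fun n => ?_) ?_ ?_
  · have h := mul_le_mul_of_nonneg_left (hconc (n + 1) n.succ_pos) hrc.le
    rw [Nat.add_sub_cancel] at h
    simp only [hstep]
    linarith
  · simp only [hstep]
    linarith
  · have h := hstep (k + 1)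
    simp only [add_assoc, Nat.reduceAdd] at h hge ⊢
    linarith
end

section
/- Let a, b : ℕ → ℝ with a strictly increasing (a(h) < a(h+1) for all h), let r, c, W be reals with W + c > 0, and define φ(h) = (W + c)·(b(h) − b(h−1)) / (a(h) − a(h−1)) for h ≥ 1. Suppose φ is non-decreasing on {h : h ≥ h₀ + 1} and r + c ≤ φ(h₀ + 1). Then for every h > h₀, (r + c)·a(h) − (W + c)·b(h) ≤ (r + c)·a(h₀) − (W + c)·b(h₀). -/
/-- Induction (telescoping) step of Theorem 2: if φ is non-decreasing on
{h : h ≥ h₀+1} and r + c ≤ φ(h₀+1), then h₀ dominates all larger thresholds. -/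
theorem stmt2 (a b : ℕ → ℝ) (r c W : ℝ) (h₀ : ℕ)
    (hinc : ∀ h : ℕ, a h < a (h + 1))
    (hWc : 0 < W + c)
    (φ : ℕ → ℝ)
    (hφ : ∀ h : ℕ, 1 ≤ h → φ h = (W + c) * (b h - b (h - 1)) / (a h - a (h - 1)))
    (hφmono : MonotoneOn φ {h : ℕ | h₀ + 1 ≤ h})
    (hge : r + c ≤ φ (h₀ + 1)) :
    ∀ h : ℕ, h₀ < h →
      (r + c) * a h - (W + c) * b h ≤ (r + c) * a h₀ - (W + c) * b h₀ := by
  have step : ∀ n : ℕ, h₀ ≤ n →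
      (r + c) * a (n + 1) - (W + c) * b (n + 1) ≤ (r + c) * a n - (W + c) * b n := by
    intro n hn
    have hle : r + c ≤ φ (n + 1) :=
      hge.trans (hφmono (Set.mem_ofPred.2 le_rfl) (Set.mem_ofPred.2 (by lia)) (by lia))
    rw [hφ (n + 1) (by lia), Nat.add_sub_cancel, le_div_iff₀ (sub_pos.2 (hinc n))] at hle
    linarith
  intro h hh
  exact Nat.le_induction (m := h₀)
    (P := fun n _ => (r + c) * a n - (W + c) * b n ≤ (r + c) * a h₀ - (W + c) * b h₀)
    le_rfl (fun n hn ih => (step n hn).trans ih) h hh.le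
end

section
/- Let a, b : ℕ → ℝ with a strictly increasing (a(h) < a(h+1) for all h), let r, c, W be reals with W + c > 0, and define φ(h) = (W + c)·(b(h) − b(h−1)) / (a(h) − a(h−1)) for h ≥ 1. Suppose φ is non-decreasing on {h : 1 ≤ h ≤ h₀} and φ(h₀) < r + c. Then for every h < h₀, (r + c)·a(h) − (W + c)·b(h) < (r + c)·a(h₀) − (W + c)·b(h₀). -/
/-- Step of Theorem 2: if φ is non-decreasing on {h : 1 ≤ h ≤ h₀} and
φ(h₀) < r + c, then h₀ strictly dominates all smaller thresholds. -/
theorem stmt3 (a b : ℕ → ℝ) (r c W : ℝ) (h₀ : ℕ)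
    (hinc : ∀ h : ℕ, a h < a (h + 1))
    (hWc : 0 < W + c)
    (φ : ℕ → ℝ)
    (hφ : ∀ h : ℕ, 1 ≤ h → φ h = (W + c) * (b h - b (h - 1)) / (a h - a (h - 1)))
    (hφmono : MonotoneOn φ {h : ℕ | 1 ≤ h ∧ h ≤ h₀})
    (hlt : φ h₀ < r + c) :
    ∀ h : ℕ, h < h₀ →
      (r + c) * a h - (W + c) * b h < (r + c) * a h₀ - (W + c) * b h₀ := by
  have step : ∀ k : ℕ, k < h₀ →
      (r + c) * a k - (W + c) * b k < (r + c) * a (k + 1) - (W + c) * b (k + 1) := by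
    intro k hk
    have hφk : φ (k + 1) < r + c :=
      (hφmono ⟨Nat.le_add_left 1 k, hk⟩ ⟨Nat.one_le_of_lt hk, le_rfl⟩ hk).trans_lt hlt
    rw [hφ (k + 1) (Nat.le_add_left 1 k), Nat.add_sub_cancel,
      div_lt_iff₀ (sub_pos.mpr (hinc k))] at hφk
    linarith
  intro h hh
  have chain : ∀ k : ℕ, h + 1 ≤ k → k ≤ h₀ →
      (r + c) * a h - (W + c) * b h < (r + c) * a k - (W + c) * b k := by
    intro k hk
    induction k, hk using Nat.le_induction with
    | base => exact fun _ => step h hh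
    | succ k _ ih => exact fun hk => (ih (Nat.le_of_succ_le hk)).trans (step k hk)
  exact chain h₀ hh le_rfl
end
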